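/- arXiv:1006.4696 — 2 statements merged into one kernel-verified Lean document; each statement's English description precedes it below -/
import Mathlib

section
/- (Price monotonicity under buyer removal) For any unit-demand market M, any buyer i, and any good j: the price of j at the lowest competitive equilibrium of M is at most the price of j at the highest competitive equilibrium of M_{-i} (the market without buyer i); moreover, if buyer i is matched to good j in the lowest competitive equilibrium of M, then these two prices are equal. -/
attribute [local instance] Classical.propDecidable

/-- A unit-demand market: finite sets of buyers `I` and goods `J`, with utility
functions `u i j : ℝ → ℝ` that are continuous, strictly decreasing, surjective
(domain and range cover all of `ℝ`), and eventually non-positive. -/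
structure Market (I J : Type) [Fintype I] [Fintype J] where
  u : I → J → ℝ → ℝ
  cont : ∀ i j, Continuous (u i j)
  anti : ∀ i j, StrictAnti (u i j)
  surj : ∀ i j, Function.Surjective (u i j)
  evNonpos : ∀ i j, ∃ x : ℝ, ∀ y ≥ x, u i j y ≤ 0

/-- A competitive equilibrium: nonnegative prices `p`, nonnegative payoffs `w`,
and a partial matching `μ` (injective on matched buyers) such that every buyer
receives a most preferred good at the prices, unmatched buyers have payoff `0`,
and unmatched goods have price `0`. -/
def IsEquilib {I J : Type} [Fintype I] [Fintype J] (M : Market I J)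
    (p : J → ℝ) (w : I → ℝ) (μ : I → Option J) : Prop :=
  (∀ i i' j, μ i = some j → μ i' = some j → i = i') ∧
  (∀ j, 0 ≤ p j) ∧ (∀ i, 0 ≤ w i) ∧
  (∀ i j, μ i = some j → w i = M.u i j (p j)) ∧
  (∀ i j, M.u i j (p j) ≤ w i) ∧
  (∀ i, μ i = none → w i = 0) ∧
  (∀ j, (∀ i, μ i ≠ some j) → p j = 0)

/-- `W` is the lowest competitive equilibrium: its prices are componentwise
below those of every competitive equilibrium. -/
def IsLowest {I J : Type} [Fintype I] [Fintype J] (M : Market I J)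
    (p : J → ℝ) (w : I → ℝ) (μ : I → Option J) : Prop :=
  IsEquilib M p w μ ∧ ∀ p' w' μ', IsEquilib M p' w' μ' → ∀ j, p j ≤ p' j

/-- `W` is the highest competitive equilibrium: its prices are componentwise
above those of every competitive equilibrium. -/
def IsHighest {I J : Type} [Fintype I] [Fintype J] (M : Market I J)
    (p : J → ℝ) (w : I → ℝ) (μ : I → Option J) : Prop :=
  IsEquilib M p w μ ∧ ∀ p' w' μ', IsEquilib M p' w' μ' → ∀ j, p' j ≤ p j

/-- Induced payoff `u_i(p) = max({u_i^j(p^j) : j} ∪ {0})`. -/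
noncomputable def inducedPayoff {I J : Type} [Fintype I] [Fintype J] (M : Market I J)
    (p : J → ℝ) (i : I) : ℝ :=
  (insert (0:ℝ) (Finset.univ.image fun j => M.u i j (p j))).max' (Finset.insert_nonempty _ _)

/-- Induced price `p^j(u) = max({p_i^j(u_i) : i} ∪ {0})`, where `p_i^j` is the
inverse of `u_i^j`. -/
noncomputable def inducedPrice {I J : Type} [Fintype I] [Fintype J] (M : Market I J)
    (w : I → ℝ) (j : J) : ℝ :=
  (insert (0:ℝ) (Finset.univ.image fun i => Function.invFun (M.u i j) (w i))).max' (Finset.insert_nonempty _ _)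

/-- The market with buyer `i0` removed. -/
def Market.removeBuyer {I J : Type} [Fintype I] [Fintype J] [DecidableEq I]
    (M : Market I J) (i0 : I) : Market {i : I // i ≠ i0} J where
  u := fun i j => M.u i.1 j
  cont := fun i j => M.cont i.1 j
  anti := fun i j => M.anti i.1 j
  surj := fun i j => M.surj i.1 j
  evNonpos := fun i j => M.evNonpos i.1 j

/-- The market with good `j0` removed. -/
def Market.removeGood {I J : Type} [Fintype I] [Fintype J] [DecidableEq J]
    (M : Market I J) (j0 : J) : Market I {j : J // j ≠ j0} where
  u := fun i j => M.u i j.1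
  cont := fun i j => M.cont i j.1
  anti := fun i j => M.anti i j.1
  surj := fun i j => M.surj i j.1
  evNonpos := fun i j => M.evNonpos i j.1

/-!
Call `(p, w, μ)` a quasi-equilibrium if every buyer gets a favourite good, with no condition on
the prices of unsold goods. If `(p, w, μ)` and `(q, v, ν)` are quasi-equilibria and `S` is the set
of goods cheaper at `q`, then every `μ`-buyer of a good in `S` is strictly better off at `q` and so
buys in `S` there as well; counting, `S` has at most as many unsold goods at `ν` as at `μ`. If no
good of `S` is unsold at `μ`, both matchings assign `S` to the same buyers and can be glued to a
quasi-equilibrium at the prices `p ⊔ q`.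

Deleting buyer `i₀` from the lowest equilibrium leaves a quasi-equilibrium whose only unsold good
with positive price is the one `i₀` bought. To compare it with the highest equilibrium without
`i₀`, offer `i₀` a payoff `t > w i₀` and let the prices at which he is worth `t` act as reserve
prices for the other buyers. An ascending auction gives a quasi-equilibrium in which unsold goods
stay at their reserve. If one of them has a positive price, it is the only one, and selling it to
`i₀` gives an equilibrium of the whole market that he prefers to the lowest one, which is
impossible. So it is an equilibrium without `i₀`, at which no good is worth more than `t` to him.
Letting `t` decrease to `w i₀`, the good that `i₀` bought is at least as expensive at the highest
equilibrium without `i₀`, and gluing the two handles the other goods.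
-/

section PartialMatching

variable {I J : Type*} {μ ν : I → Option J} {S : Set J} {i : I} {j k : J}

/-- `μ` is a partial matching of buyers to goods: no good goes to two buyers. -/
def IsPartialMatching (μ : I → Option J) : Prop :=
  ∀ i i' j, μ i = some j → μ i' = some j → i = i'

/-- The goods that a partial matching leaves without a buyer. -/
def unsold (μ : I → Option J) : Set J :=
  {j | ∀ i, μ i ≠ some j}

/-- The buyers to whom a partial matching assigns a good of `S`. -/
def buyersOf (μ : I → Option J) (S : Set J) : Set I :=
  {i | ∃ j ∈ S, μ i = some j}

theorem notMem_unsold_iff : j ∉ unsold μ ↔ ∃ i, μ i = some j := by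
  simp [unsold]

theorem mem_buyersOf_iff (h : μ i = some j) : i ∈ buyersOf μ S ↔ j ∈ S := by
  simp [buyersOf, h]

theorem IsPartialMatching.ncard_buyersOf_add_ncard_unsold [Finite J] (hμ : IsPartialMatching μ)
    (S : Set J) : (buyersOf μ S).ncard + (S ∩ unsold μ).ncard = S.ncard := by
  have hinj : Set.InjOn μ (buyersOf μ S) := by
    rintro i ⟨j, -, hi⟩ i' - h
    exact hμ i i' j hi (h ▸ hi)
  have himage : μ '' buyersOf μ S = some '' (S \ unsold μ) := by
    ext x
    constructor
    · rintro ⟨i, ⟨j, hj, hi⟩, rfl⟩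
      exact ⟨j, ⟨hj, notMem_unsold_iff.2 ⟨i, hi⟩⟩, hi.symm⟩
    · rintro ⟨j, ⟨hj, hun⟩, rfl⟩
      obtain ⟨i, hi⟩ := notMem_unsold_iff.1 hun
      exact ⟨i, ⟨j, hj, hi⟩, hi⟩
  rw [← hinj.ncard_image, himage,
    Set.ncard_image_of_injective _ (Option.some_injective J), add_comm,
    Set.ncard_inter_add_ncard_sdiff_eq_ncard]

/-- Give good `k` to buyer `i`, taking it away from its previous owner: the effect of a bid on the
matching of an auction state. -/
noncomputable def award (μ : I → Option J) (i : I) (k : J) : I → Option J :=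
  fun a => if a = i then some k else if μ a = some k then none else μ a

theorem award_eq_some_iff {a : I} :
    award μ i k a = some j ↔ a = i ∧ j = k ∨ a ≠ i ∧ j ≠ k ∧ μ a = some j := by
  unfold award
  grind

theorem IsPartialMatching.award (hμ : IsPartialMatching μ) (i : I) (k : J) :
    IsPartialMatching (award μ i k) := by
  intro a b j ha hb
  rw [award_eq_some_iff] at ha hb
  grind [IsPartialMatching]

theorem unsold_award (hi : μ i = none) : unsold (award μ i k) = unsold μ \ {k} := by
  ext j
  simp only [unsold, ne_eq, award_eq_some_iff, Set.mem_ofPred_eq, Set.mem_sdiff,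
    Set.mem_singleton_iff]
  grind

theorem piecewise_buyersOf_eq_some_iff (h : buyersOf μ S = buyersOf ν S) :
    (buyersOf μ S).piecewise μ ν i = some j ↔ j ∈ S ∧ μ i = some j ∨ j ∉ S ∧ ν i = some j := by
  by_cases hi : i ∈ buyersOf μ S
  · have hν : ν i = some j → j ∈ S := fun hj => (mem_buyersOf_iff hj).1 (h ▸ hi)
    have hμ : μ i = some j → j ∈ S := fun hj => (mem_buyersOf_iff hj).1 hi
    rw [Set.piecewise_eq_of_mem _ _ _ hi]
    tauto
  · have hν : ν i = some j → j ∉ S := fun hj hjS => hi (h ▸ (mem_buyersOf_iff hj).2 hjS)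
    have hμ : μ i = some j → j ∉ S := fun hj hjS => hi ((mem_buyersOf_iff hj).2 hjS)
    rw [Set.piecewise_eq_of_notMem _ _ _ hi]
    tauto

theorem IsPartialMatching.piecewise_buyersOf (hμ : IsPartialMatching μ) (hν : IsPartialMatching ν)
    (h : buyersOf μ S = buyersOf ν S) :
    IsPartialMatching ((buyersOf μ S).piecewise μ ν) := by
  intro i i' j hi hi'
  rw [piecewise_buyersOf_eq_some_iff h] at hi hi'
  rcases hi with ⟨hj, hi⟩ | ⟨hj, hi⟩ <;> rcases hi' with ⟨hj', hi'⟩ | ⟨hj', hi'⟩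
  · exact hμ i i' j hi hi'
  · exact absurd hj hj'
  · exact absurd hj' hj
  · exact hν i i' j hi hi'

theorem unsold_piecewise_buyersOf (h : buyersOf μ S = buyersOf ν S) :
    unsold ((buyersOf μ S).piecewise μ ν) = S.ite (unsold μ) (unsold ν) := by
  ext j
  by_cases hj : j ∈ S <;> simp [unsold, Set.ite, piecewise_buyersOf_eq_some_iff h, hj]

end PartialMatching

section ExtendBuyer

variable {I α : Type*} {i₀ : I}

/-- Extend a payoff vector or a matching of the buyers other than `i₀` by the value `a` at
`i₀`. -/
noncomputable def extendBuyer (a : α) (f : {i : I // i ≠ i₀} → α) : I → α :=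
  Function.extend Subtype.val f fun _ => a

@[simp]
theorem extendBuyer_self (a : α) (f : {i : I // i ≠ i₀} → α) : extendBuyer a f i₀ = a :=
  Function.extend_apply' _ _ _ (by simp)

@[simp]
theorem extendBuyer_coe (a : α) (f : {i : I // i ≠ i₀} → α) (i : {i : I // i ≠ i₀}) :
    extendBuyer a f i = f i :=
  Subtype.val_injective.extend_apply _ _ _

theorem forall_buyer_iff (i₀ : I) {P : I → Prop} :
    (∀ i, P i) ↔ P i₀ ∧ ∀ i : {i // i ≠ i₀}, P i :=
  ⟨fun h => ⟨h i₀, fun i => h i⟩, fun h i =>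
    if hi : i = i₀ then hi ▸ h.1 else h.2 ⟨i, hi⟩⟩

theorem IsPartialMatching.extendBuyer {J : Type*} {ν : {i : I // i ≠ i₀} → Option J} {k : J}
    (hν : IsPartialMatching ν) (hk : k ∈ unsold ν) :
    IsPartialMatching (extendBuyer (some k) ν) := by
  simp only [IsPartialMatching, forall_buyer_iff i₀, extendBuyer_self, extendBuyer_coe,
    Option.some.injEq]
  refine ⟨⟨fun _ _ _ => trivial, ?_⟩, fun i => ⟨?_, fun i' j hi hi' => ?_⟩⟩
  · rintro i' j rfl hi'
    exact absurd hi' (hk i')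
  · rintro j hi rfl
    exact absurd hi (hk i)
  · exact congrArg Subtype.val (hν i i' j hi hi')

theorem unsold_extendBuyer {J : Type*} {ν : {i : I // i ≠ i₀} → Option J} {k : J} :
    unsold (extendBuyer (some k) ν) = unsold ν \ {k} := by
  ext j
  simp only [unsold, forall_buyer_iff i₀, extendBuyer_self, extendBuyer_coe, ne_eq,
    Option.some.injEq, Set.mem_ofPred_eq, Set.mem_sdiff, Set.mem_singleton_iff]
  tauto

end ExtendBuyer

/-- A quasi-equilibrium: every buyer receives a most preferred good at the prices `p`, or nothing
if no good is worth its price, but unsold goods may have any price. Unlike equilibria, these are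
preserved by deleting a buyer. -/
structure IsQuasiEquilib {I J : Type} [Fintype I] [Fintype J] (M : Market I J)
    (p : J → ℝ) (w : I → ℝ) (μ : I → Option J) : Prop where
  isPartialMatching : IsPartialMatching μ
  payoff_nonneg : ∀ i, 0 ≤ w i
  payoff_eq : ∀ i j, μ i = some j → w i = M.u i j (p j)
  utility_le : ∀ i j, M.u i j (p j) ≤ w i
  payoff_eq_zero : ∀ i, μ i = none → w i = 0

/-- A state of the ascending auction with reserve prices `r` and bid increment `δ`, at current
prices `q`: no buyer holding a good would gain by taking another one at `δ` above its price. -/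
structure IsAuctionState {I J : Type} [Fintype I] [Fintype J] (M : Market I J)
    (r : J → ℝ) (δ : ℝ) (q : J → ℝ) (μ : I → Option J) : Prop where
  isPartialMatching : IsPartialMatching μ
  reserve_le : ∀ j, r j ≤ q j
  price_eq_reserve : ∀ j ∈ unsold μ, q j = r j
  utility_nonneg : ∀ i j, μ i = some j → 0 ≤ M.u i j (q j)
  utility_add_le : ∀ i j, μ i = some j → ∀ k, M.u i k (q k + δ) ≤ M.u i j (q j)

/-- A state of the ascending auction in which no buyer wants to bid. For `δ = 0` this is a
quasi-equilibrium in which unsold goods stay at their reserve price. -/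
structure IsFinalAuctionState {I J : Type} [Fintype I] [Fintype J] (M : Market I J)
    (r : J → ℝ) (δ : ℝ) (q : J → ℝ) (μ : I → Option J) : Prop
    extends IsAuctionState M r δ q μ where
  utility_add_nonpos : ∀ i, μ i = none → ∀ k, M.u i k (q k + δ) ≤ 0

section Existence

variable {I J : Type} [Fintype I] [Fintype J] {M : Market I J} {r q : J → ℝ} {δ : ℝ}
  {μ : I → Option J}

theorem isAuctionState_reserve (M : Market I J) (r : J → ℝ) (δ : ℝ) :
    IsAuctionState M r δ r fun _ => none where
  isPartialMatching := by simp [IsPartialMatching]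
  reserve_le _ := le_rfl
  price_eq_reserve _ _ := rfl
  utility_nonneg := by simp
  utility_add_le := by simp

theorem IsAuctionState.bid (h : IsAuctionState M r δ q μ) (hδ : 0 ≤ δ) {i : I} (hi : μ i = none)
    {l : J} (hl : 0 ≤ M.u i l (q l + δ)) (hmax : ∀ k, M.u i k (q k + δ) ≤ M.u i l (q l + δ)) :
    IsAuctionState M r δ (q + Pi.single l δ) (award μ i l) := by
  have hle : q ≤ q + Pi.single l δ := le_add_of_nonneg_right (Pi.single_nonneg.2 hδ)
  have hself : (q + Pi.single l δ : J → ℝ) l = q l + δ := by simp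
  have hne : ∀ j ≠ l, (q + Pi.single l δ : J → ℝ) j = q j := fun j hj => by simp [hj]
  have hanti : ∀ a k, M.u a k ((q + Pi.single l δ : J → ℝ) k + δ) ≤ M.u a k (q k + δ) := fun a k =>
    (M.anti a k).antitone (add_le_add_left (hle k) δ)
  refine ⟨h.isPartialMatching.award i l, fun j => (h.reserve_le j).trans (hle j), ?_, ?_, ?_⟩
  · rw [unsold_award hi]
    rintro j ⟨hj, hjl⟩
    rw [hne j hjl, h.price_eq_reserve j hj]
  · intro a j ha
    obtain ⟨rfl, rfl⟩ | ⟨-, hj, ha⟩ := award_eq_some_iff.1 ha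
    · rwa [hself]
    · rw [hne j hj]
      exact h.utility_nonneg a j ha
  · intro a j ha k
    refine (hanti a k).trans ?_
    obtain ⟨rfl, rfl⟩ | ⟨-, hj, ha⟩ := award_eq_some_iff.1 ha
    · rw [hself]
      exact hmax k
    · rw [hne j hj]
      exact h.utility_add_le a j ha k

theorem Market.exists_forall_le_of_utility_nonneg (M : Market I J) :
    ∃ B : ℝ, ∀ i j x, 0 ≤ M.u i j x → x ≤ B := by
  choose X hX using fun ij : I × J => M.evNonpos ij.1 ij.2
  obtain ⟨B, hB⟩ := (Set.finite_range X).bddAbove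
  refine ⟨B, fun i j x hx => le_trans ?_ (hB ⟨(i, j), rfl⟩)⟩
  exact (M.anti i j).le_iff_ge.1 ((hX (i, j) _ le_rfl).trans hx)

theorem IsAuctionState.price_le (h : IsAuctionState M r δ q μ) {B : ℝ}
    (hB : ∀ i j x, 0 ≤ M.u i j x → x ≤ B) (j : J) : q j ≤ max (r j) B := by
  by_cases hj : j ∈ unsold μ
  · exact le_max_of_le_left (h.price_eq_reserve j hj).le
  · obtain ⟨i, hi⟩ := notMem_unsold_iff.1 hj
    exact le_max_of_le_right (hB i j _ (h.utility_nonneg i j hi))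

theorem Market.exists_isFinalAuctionState (M : Market I J) (r : J → ℝ) (hδ : 0 < δ) :
    ∃ q μ, IsFinalAuctionState M r δ q μ := by
  obtain ⟨B, hB⟩ := M.exists_forall_le_of_utility_nonneg
  let totals : Set ℝ := {x | ∃ q μ, IsAuctionState M r δ q μ ∧ ∑ j, q j = x}
  have hne : totals.Nonempty := ⟨_, r, _, isAuctionState_reserve M r δ, rfl⟩
  have hbdd : BddAbove totals := by
    refine ⟨∑ j, max (r j) B, ?_⟩
    rintro _ ⟨q, μ, h, rfl⟩
    exact Finset.sum_le_sum fun j _ => h.price_le hB j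
  -- A bid raises the total price by `δ`, so none is possible within `δ` of the supremum.
  obtain ⟨_, ⟨q, μ, h, rfl⟩, hlt⟩ := exists_lt_of_lt_csSup hne (sub_lt_self (sSup totals) hδ)
  refine ⟨q, μ, h, fun i hi k => ?_⟩
  by_contra! hk
  have : Nonempty J := ⟨k⟩
  obtain ⟨l, hmax⟩ := Finite.exists_max fun j => M.u i j (q j + δ)
  have hbid := h.bid hδ.le hi (hk.le.trans (hmax k)) hmax
  have hle : ∑ j, (q + Pi.single l δ : J → ℝ) j ≤ sSup totals :=
    le_csSup hbdd ⟨_, _, hbid, rfl⟩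
  simp only [Pi.add_apply, Finset.sum_add_distrib, Finset.sum_pi_single',
    Finset.mem_univ, if_true] at hle
  linarith

theorem isClosed_setOf_isFinalAuctionState (M : Market I J) (r : J → ℝ) (μ : I → Option J) :
    IsClosed {x : ℝ × (J → ℝ) | IsFinalAuctionState M r x.1 x.2 μ} := by
  refine IsSeqClosed.isClosed fun x y hx hxy => ?_
  have hδ : Filter.Tendsto (fun n => (x n).1) Filter.atTop (nhds y.1) := hxy.fst_nhds
  have hq : ∀ j, Filter.Tendsto (fun n => (x n).2 j) Filter.atTop (nhds (y.2 j)) :=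
    tendsto_pi_nhds.1 hxy.snd_nhds
  have hu : ∀ i j, Filter.Tendsto (fun n => M.u i j ((x n).2 j)) Filter.atTop
      (nhds (M.u i j (y.2 j))) := fun i j => ((M.cont i j).tendsto _).comp (hq j)
  have huδ : ∀ i j, Filter.Tendsto (fun n => M.u i j ((x n).2 j + (x n).1)) Filter.atTop
      (nhds (M.u i j (y.2 j + y.1))) := fun i j => ((M.cont i j).tendsto _).comp ((hq j).add hδ)
  exact
    { isPartialMatching := (hx 0).isPartialMatching
      reserve_le := fun j => ge_of_tendsto' (hq j) fun n => (hx n).reserve_le j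
      price_eq_reserve := fun j hj =>
        tendsto_nhds_unique (hq j)
          (tendsto_const_nhds.congr fun n => ((hx n).price_eq_reserve j hj).symm)
      utility_nonneg := fun i j hi =>
        ge_of_tendsto' (hu i j) fun n => (hx n).utility_nonneg i j hi
      utility_add_le := fun i j hi k =>
        le_of_tendsto_of_tendsto' (huδ i k) (hu i j) fun n => (hx n).utility_add_le i j hi k
      utility_add_nonpos := fun i hi k =>
        le_of_tendsto' (huδ i k) fun n => (hx n).utility_add_nonpos i hi k }

theorem Market.exists_isFinalAuctionState_zero (M : Market I J) (r : J → ℝ) :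
    ∃ q μ, IsFinalAuctionState M r 0 q μ := by
  obtain ⟨B, hB⟩ := M.exists_forall_le_of_utility_nonneg
  let K : Set (ℝ × (J → ℝ)) := (Set.Icc 0 1 ×ˢ Set.Icc r fun j => max (r j) B) ∩
    ⋃ μ, {x | IsFinalAuctionState M r x.1 x.2 μ}
  have hK : IsCompact K := (isCompact_Icc.prod isCompact_Icc).inter_right
    (isClosed_iUnion_of_finite fun μ => isClosed_setOf_isFinalAuctionState M r μ)
  have hsub : Set.Ioc (0 : ℝ) 1 ⊆ Prod.fst '' K := by
    intro δ hδ
    obtain ⟨q, μ, h⟩ := M.exists_isFinalAuctionState r hδ.1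
    exact ⟨(δ, q), ⟨⟨Set.Ioc_subset_Icc_self hδ, h.reserve_le, h.price_le hB⟩,
      Set.mem_iUnion.2 ⟨μ, h⟩⟩, rfl⟩
  have hzero : (0 : ℝ) ∈ Prod.fst '' K := by
    refine closure_minimal hsub (hK.image continuous_fst).isClosed ?_
    rw [closure_Ioc zero_ne_one]
    exact Set.left_mem_Icc.2 zero_le_one
  obtain ⟨⟨_, q⟩, ⟨-, hx⟩, rfl⟩ := hzero
  obtain ⟨μ, h⟩ := Set.mem_iUnion.1 hx
  exact ⟨q, μ, h⟩

theorem IsFinalAuctionState.isQuasiEquilib (h : IsFinalAuctionState M r 0 q μ) :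
    IsQuasiEquilib M q (fun i => (μ i).elim 0 fun j => M.u i j (q j)) μ where
  isPartialMatching := h.isPartialMatching
  payoff_nonneg i := by
    cases hi : μ i with
    | none => exact le_rfl
    | some j => exact h.utility_nonneg i j hi
  payoff_eq i j hi := by simp [hi]
  utility_le i k := by
    cases hi : μ i with
    | none => simpa using h.utility_add_nonpos i hi k
    | some j => simpa using h.utility_add_le i j hi k
  payoff_eq_zero i hi := by simp [hi]

theorem Market.exists_isQuasiEquilib (M : Market I J) (r : J → ℝ) :
    ∃ q w μ, IsQuasiEquilib M q w μ ∧ (∀ j, r j ≤ q j) ∧ ∀ j ∈ unsold μ, q j = r j := by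
  obtain ⟨q, μ, h⟩ := M.exists_isFinalAuctionState_zero r
  exact ⟨q, _, μ, h.isQuasiEquilib, h.reserve_le, h.price_eq_reserve⟩

end Existence

section Comparison

variable {I J : Type} [Fintype I] [Fintype J] {M : Market I J} {p q : J → ℝ} {w v : I → ℝ}
  {μ ν : I → Option J}

theorem isEquilib_iff : IsEquilib M p w μ ↔
    IsQuasiEquilib M p w μ ∧ (∀ j, 0 ≤ p j) ∧ ∀ j ∈ unsold μ, p j = 0 :=
  ⟨fun ⟨hμ, hp, hw, heq, hle, hnone, hun⟩ => ⟨⟨hμ, hw, heq, hle, hnone⟩, hp, hun⟩,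
    fun ⟨⟨hμ, hw, heq, hle, hnone⟩, hp, hun⟩ => ⟨hμ, hp, hw, heq, hle, hnone, hun⟩⟩

theorem IsEquilib.isQuasiEquilib (h : IsEquilib M p w μ) : IsQuasiEquilib M p w μ :=
  (isEquilib_iff.1 h).1

theorem IsEquilib.price_nonneg (h : IsEquilib M p w μ) (j : J) : 0 ≤ p j :=
  (isEquilib_iff.1 h).2.1 j

theorem IsEquilib.price_eq_zero (h : IsEquilib M p w μ) {j : J} (hj : j ∈ unsold μ) : p j = 0 :=
  (isEquilib_iff.1 h).2.2 j hj

theorem IsEquilib.notMem_unsold_of_pos (h : IsEquilib M p w μ) {j : J} (hj : 0 < p j) :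
    j ∉ unsold μ :=
  fun hun => hj.ne' (h.price_eq_zero hun)

theorem IsEquilib.eq_some_of_mem_unsold {i₀ : I} (h : IsEquilib M p w μ) {j : J}
    (hj : 0 < p j) (hun : j ∈ unsold fun i : {i // i ≠ i₀} => μ i) : μ i₀ = some j := by
  by_contra hne
  exact h.notMem_unsold_of_pos hj ((forall_buyer_iff i₀).2 ⟨hne, hun⟩)

theorem IsQuasiEquilib.buyersOf_subset (hp : IsQuasiEquilib M p w μ) (hq : IsQuasiEquilib M q v ν) :
    buyersOf μ {j | q j < p j} ⊆ buyersOf ν {j | q j < p j} := by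
  rintro i ⟨j, hj, hi⟩
  have hwv : w i < v i := by
    rw [hp.payoff_eq i j hi]
    exact (M.anti i j hj).trans_le (hq.utility_le i j)
  cases hν : ν i with
  | none => exact absurd (hq.payoff_eq_zero i hν) ((hp.payoff_nonneg i).trans_lt hwv).ne'
  | some k =>
    refine ⟨k, (M.anti i k).lt_iff_gt.1 ?_, hν⟩
    exact ((hp.utility_le i k).trans_lt hwv).trans_eq (hq.payoff_eq i k hν)

theorem IsQuasiEquilib.ncard_unsold_le (hp : IsQuasiEquilib M p w μ)
    (hq : IsQuasiEquilib M q v ν) :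
    ({j | q j < p j} ∩ unsold ν).ncard ≤ ({j | q j < p j} ∩ unsold μ).ncard := by
  have hbuyers := Set.ncard_le_ncard (hp.buyersOf_subset hq)
  have hμ := hp.isPartialMatching.ncard_buyersOf_add_ncard_unsold {j | q j < p j}
  have hν := hq.isPartialMatching.ncard_buyersOf_add_ncard_unsold {j | q j < p j}
  omega

theorem IsQuasiEquilib.buyersOf_eq (hp : IsQuasiEquilib M p w μ) (hq : IsQuasiEquilib M q v ν)
    (hsold : ∀ j, q j < p j → j ∉ unsold μ) :
    buyersOf μ {j | q j < p j} = buyersOf ν {j | q j < p j} := by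
  refine Set.eq_of_subset_of_ncard_le (hp.buyersOf_subset hq) ?_
  have hμ := hp.isPartialMatching.ncard_buyersOf_add_ncard_unsold {j | q j < p j}
  have hν := hq.isPartialMatching.ncard_buyersOf_add_ncard_unsold {j | q j < p j}
  have hempty : {j | q j < p j} ∩ unsold μ = ∅ :=
    Set.disjoint_iff_inter_eq_empty.1 (Set.disjoint_left.2 hsold)
  rw [hempty, Set.ncard_empty] at hμ
  omega

theorem IsQuasiEquilib.sup (hp : IsQuasiEquilib M p w μ) (hq : IsQuasiEquilib M q v ν)
    (hbuyers : buyersOf μ {j | q j < p j} = buyersOf ν {j | q j < p j}) :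
    IsQuasiEquilib M (p ⊔ q) ((buyersOf μ {j | q j < p j}).piecewise w v)
      ((buyersOf μ {j | q j < p j}).piecewise μ ν) where
  isPartialMatching := hp.isPartialMatching.piecewise_buyersOf hq.isPartialMatching hbuyers
  payoff_nonneg i := by
    by_cases hi : i ∈ buyersOf μ {j | q j < p j} <;>
      simp [hi, hp.payoff_nonneg, hq.payoff_nonneg]
  payoff_eq i j hi := by
    rw [piecewise_buyersOf_eq_some_iff hbuyers] at hi
    rcases hi with ⟨hj, hi⟩ | ⟨hj, hi⟩
    · rw [Set.piecewise_eq_of_mem _ _ _ ((mem_buyersOf_iff hi).2 hj), Pi.sup_apply,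
        sup_of_le_left (le_of_lt hj), hp.payoff_eq i j hi]
    · rw [Set.piecewise_eq_of_notMem _ _ _ (hbuyers ▸ mt (mem_buyersOf_iff hi).1 hj), Pi.sup_apply,
        sup_of_le_right (not_lt.1 hj), hq.payoff_eq i j hi]
  utility_le i j := by
    by_cases hi : i ∈ buyersOf μ {j | q j < p j}
    · rw [Set.piecewise_eq_of_mem _ _ _ hi]
      exact ((M.anti i j).antitone le_sup_left).trans (hp.utility_le i j)
    · rw [Set.piecewise_eq_of_notMem _ _ _ hi]
      exact ((M.anti i j).antitone le_sup_right).trans (hq.utility_le i j)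
  payoff_eq_zero i hi := by
    by_cases hmem : i ∈ buyersOf μ {j | q j < p j}
    · rw [Set.piecewise_eq_of_mem _ _ _ hmem] at hi ⊢
      exact hp.payoff_eq_zero i hi
    · rw [Set.piecewise_eq_of_notMem _ _ _ hmem] at hi ⊢
      exact hq.payoff_eq_zero i hi

theorem IsEquilib.exists_isEquilib_sup (hq : IsEquilib M q v ν) (hp : IsQuasiEquilib M p w μ)
    (hsold : ∀ j, q j < p j → j ∉ unsold μ) : ∃ v' ν', IsEquilib M (p ⊔ q) v' ν' := by
  have hbuyers := hp.buyersOf_eq hq.isQuasiEquilib hsold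
  refine ⟨_, _, isEquilib_iff.2 ⟨hp.sup hq.isQuasiEquilib hbuyers,
    fun j => (hq.price_nonneg j).trans le_sup_right, fun j hj => ?_⟩⟩
  rw [unsold_piecewise_buyersOf hbuyers] at hj
  rcases hj with ⟨hj, hlt⟩ | ⟨hj, hle⟩
  · exact absurd hj (hsold j hlt)
  · rw [Pi.sup_apply, sup_of_le_right (not_lt.1 hle), hq.price_eq_zero hj]

theorem IsHighest.price_le_of_isQuasiEquilib (hq : IsHighest M q v ν)
    (hp : IsQuasiEquilib M p w μ) (hsold : ∀ j, q j < p j → j ∉ unsold μ) (j : J) :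
    p j ≤ q j := by
  obtain ⟨v', ν', hsup⟩ := hq.1.exists_isEquilib_sup hp hsold
  exact le_sup_left.trans (hq.2 _ _ _ hsup j)

theorem IsLowest.payoff_le (hp : IsLowest M p w μ) (hq : IsEquilib M q v ν) (i : I) :
    v i ≤ w i := by
  cases hi : ν i with
  | none =>
    rw [hq.isQuasiEquilib.payoff_eq_zero i hi]
    exact hp.1.isQuasiEquilib.payoff_nonneg i
  | some j =>
    rw [hq.isQuasiEquilib.payoff_eq i j hi]
    exact ((M.anti i j).antitone (hp.2 _ _ _ hq j)).trans (hp.1.isQuasiEquilib.utility_le i j)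

end Comparison

section RemoveBuyer

variable {I J : Type} [Fintype I] [Fintype J] [DecidableEq I] {M : Market I J} {i₀ : I}
  {p q : J → ℝ} {w : I → ℝ} {μ : I → Option J} {v : {i // i ≠ i₀} → ℝ}
  {ν : {i // i ≠ i₀} → Option J}

theorem IsQuasiEquilib.removeBuyer (h : IsQuasiEquilib M p w μ) (i₀ : I) :
    IsQuasiEquilib (M.removeBuyer i₀) p (fun i => w i) (fun i => μ i) where
  isPartialMatching i i' j hi hi' := Subtype.ext (h.isPartialMatching i i' j hi hi')
  payoff_nonneg i := h.payoff_nonneg i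
  payoff_eq i := h.payoff_eq i
  utility_le i := h.utility_le i
  payoff_eq_zero i := h.payoff_eq_zero i

theorem IsEquilib.subsingleton_unsold (h : IsEquilib M p w μ)
    (hq : IsQuasiEquilib (M.removeBuyer i₀) q v ν) (hq0 : ∀ j, 0 ≤ q j) :
    ({j | q j < p j} ∩ unsold ν).Subsingleton := by
  have hμ : ({j | q j < p j} ∩ unsold fun i : {i // i ≠ i₀} => μ i).Subsingleton := by
    rintro j ⟨hj, hun⟩ k ⟨hk, hun'⟩
    have hμj := h.eq_some_of_mem_unsold ((hq0 j).trans_lt hj) hun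
    have hμk := h.eq_some_of_mem_unsold ((hq0 k).trans_lt hk) hun'
    exact Option.some_injective _ (hμj.symm.trans hμk)
  rw [← Set.ncard_le_one_iff_subsingleton] at hμ ⊢
  exact ((h.isQuasiEquilib.removeBuyer i₀).ncard_unsold_le hq).trans hμ

theorem IsQuasiEquilib.insertBuyer (h : IsQuasiEquilib (M.removeBuyer i₀) q v ν) {k : J}
    (hk : k ∈ unsold ν) (hpos : 0 ≤ M.u i₀ k (q k))
    (hmax : ∀ j, M.u i₀ j (q j) ≤ M.u i₀ k (q k)) :
    IsQuasiEquilib M q (extendBuyer (M.u i₀ k (q k)) v) (extendBuyer (some k) ν) where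
  isPartialMatching := h.isPartialMatching.extendBuyer hk
  payoff_nonneg := (forall_buyer_iff i₀).2
    ⟨by simpa using hpos, fun i => by simpa using h.payoff_nonneg i⟩
  payoff_eq := (forall_buyer_iff i₀).2
    ⟨by simp +contextual, fun i => by simpa [Market.removeBuyer] using h.payoff_eq i⟩
  utility_le := (forall_buyer_iff i₀).2
    ⟨by simpa using hmax, fun i => by simpa [Market.removeBuyer] using h.utility_le i⟩
  payoff_eq_zero := (forall_buyer_iff i₀).2 ⟨by simp, fun i => by simpa using h.payoff_eq_zero i⟩

theorem IsEquilib.exists_removeBuyer_or_exists_payoff_eq (h : IsEquilib M p w μ) {t : ℝ}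
    (ht : w i₀ < t) :
    (∃ q v ν, IsEquilib (M.removeBuyer i₀) q v ν ∧ ∀ j, M.u i₀ j (q j) ≤ t) ∨
      ∃ q v ν, IsEquilib M q v ν ∧ v i₀ = t := by
  choose x hx using fun j => M.surj i₀ j t
  obtain ⟨q, v, ν, hq, hle, hun⟩ :=
    (M.removeBuyer i₀).exists_isQuasiEquilib fun j => max 0 (x j)
  have hq0 : ∀ j, 0 ≤ q j := fun j => (le_max_left _ _).trans (hle j)
  have hqt : ∀ j, M.u i₀ j (q j) ≤ t := fun j =>
    hx j ▸ (M.anti i₀ j).antitone ((le_max_right _ _).trans (hle j))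
  by_cases hall : ∀ j ∈ unsold ν, q j = 0
  · exact .inl ⟨q, v, ν, isEquilib_iff.2 ⟨hq, hq0, hall⟩, hqt⟩
  push Not at hall
  obtain ⟨k, hk, hk0⟩ := hall
  have hut : ∀ j ∈ unsold ν, q j ≠ 0 → M.u i₀ j (q j) = t := by
    intro j hj hj0
    rcases max_choice 0 (x j) with hmax | hmax
    · exact absurd ((hun j hj).trans hmax) hj0
    · rw [hun j hj, hmax, hx j]
  have hlt : ∀ j ∈ unsold ν, q j ≠ 0 → q j < p j := by
    intro j hj hj0
    rw [← (M.anti i₀ j).lt_iff_gt, hut j hj hj0]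
    exact (h.isQuasiEquilib.utility_le i₀ j).trans_lt ht
  have hkt := hut k hk hk0
  have ht0 : 0 ≤ t := (h.isQuasiEquilib.payoff_nonneg i₀).trans ht.le
  refine .inr ⟨q, _, _, isEquilib_iff.2 ⟨hq.insertBuyer hk (hkt ▸ ht0) (hkt ▸ hqt), hq0, ?_⟩,
    (extendBuyer_self _ _).trans hkt⟩
  rw [unsold_extendBuyer]
  rintro j ⟨hj, hjk⟩
  by_contra hj0
  exact hjk (h.subsingleton_unsold hq hq0 ⟨hlt j hj hj0, hj⟩ ⟨hlt k hk hk0, hk⟩)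

theorem IsLowest.utility_le_payoff_of_isHighest_removeBuyer (hlow : IsLowest M p w μ)
    (hhigh : IsHighest (M.removeBuyer i₀) q v ν) (j : J) : M.u i₀ j (q j) ≤ w i₀ := by
  refine le_of_forall_gt_imp_ge_of_dense fun t ht => ?_
  rcases hlow.1.exists_removeBuyer_or_exists_payoff_eq ht with
    ⟨q', v', ν', hq', hle⟩ | ⟨q', v', ν', hq', rfl⟩
  · exact ((M.anti i₀ j).antitone (hhigh.2 _ _ _ hq' j)).trans (hle j)
  · exact absurd (hlow.payoff_le hq' i₀) ht.not_ge

theorem IsLowest.price_le_of_match (hlow : IsLowest M p w μ)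
    (hhigh : IsHighest (M.removeBuyer i₀) q v ν) {j : J} (hj : μ i₀ = some j) : p j ≤ q j := by
  rw [← (M.anti i₀ j).le_iff_ge, ← hlow.1.isQuasiEquilib.payoff_eq i₀ j hj]
  exact hlow.utility_le_payoff_of_isHighest_removeBuyer hhigh j

theorem IsEquilib.removeBuyer_price_le_of_match (hp : IsEquilib M p w μ)
    (hq : IsEquilib (M.removeBuyer i₀) q v ν) {j : J} (hj : μ i₀ = some j) : q j ≤ p j := by
  by_contra! hlt
  have hν : {k | p k < q k} ∩ unsold ν = ∅ := Set.disjoint_iff_inter_eq_empty.1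
    (Set.disjoint_left.2 fun k hk => hq.notMem_unsold_of_pos ((hp.price_nonneg k).trans_lt hk))
  have hcard := hq.isQuasiEquilib.ncard_unsold_le (hp.isQuasiEquilib.removeBuyer i₀)
  rw [hν, Set.ncard_empty, Nat.le_zero, Set.ncard_eq_zero] at hcard
  exact Set.eq_empty_iff_forall_notMem.1 hcard j
    ⟨hlt, fun i hi => i.2 (hp.isQuasiEquilib.isPartialMatching i i₀ j hi hj)⟩

end RemoveBuyer

/-- Price monotonicity under buyer removal: the price of any good `j` at the
lowest equilibrium of `M` is at most its price at the highest equilibrium of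
`M` without buyer `i0`, with equality when `i0` is matched to `j` at the
lowest equilibrium of `M`. -/
theorem price_le_removeBuyer {I J : Type} [Fintype I] [Fintype J] [DecidableEq I]
    (M : Market I J) (i0 : I)
    (p : J → ℝ) (w : I → ℝ) (μ : I → Option J) (hlow : IsLowest M p w μ)
    (pb : J → ℝ) (wb : {i : I // i ≠ i0} → ℝ) (μb : {i : I // i ≠ i0} → Option J)
    (hhigh : IsHighest (M.removeBuyer i0) pb wb μb) (j : J) :
    p j ≤ pb j ∧ (μ i0 = some j → p j = pb j) := by
  have hle : p j ≤ pb j := by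
    refine hhigh.price_le_of_isQuasiEquilib (hlow.1.isQuasiEquilib.removeBuyer i0)
      (fun k hk hun => ?_) j
    have hmatch := hlow.1.eq_some_of_mem_unsold ((hhigh.1.price_nonneg k).trans_lt hk) hun
    exact (hlow.price_le_of_match hhigh hmatch).not_gt hk
  exact ⟨hle, fun hj => hle.antisymm (hlow.1.removeBuyer_price_le_of_match hhigh.1 hj)⟩
end

section
/- (Continuum of equilibria) In a unit-demand market with |I| = |J|, if the lowest and highest competitive equilibria W_low and W_high are distinct, then there exists a continuum of competitive equilibria: a map t ↦ W(t) on [0,1] with W(0) = W_low, W(1) = W_high, such that each W(t) is a competitive equilibrium whose price vector dominates (1−t)p(W_low) + t·p(W_high) componentwise, and the map is injective. -/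
attribute [local instance] Classical.propDecidable

/-!
Let `p ≤ q ≤ p'` with `p` and `p'` equilibrium prices. Some equilibrium has prices `r ≥ q` with
`r j = q j` at a good `j` where `p j < p' j`; along the segment from `p` to `p'` this equality
makes the equilibria pairwise distinct.

To find `r`, first add worthless goods, which stand for staying unmatched, and dummy buyers, who
take the unsold goods. Equilibria then are envy-free perfect assignments. At prices `q` the
assignment supporting `p` only creates envy among the holders of goods where `p` and `p'` differ.
Vacate these goods and run an ascending auction with step `ε` and reserve prices `q`. A good that
has received a bid stays sold, and the auction ends when the last vacant good is sold, one step
above its reserve price. Letting `ε → 0` gives envy-free prices that are at least `q` and equal to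
`q` at one vacated good. Their minimum with `p'` is again envy-free, and it is `r`.
-/

open Filter Set

section EnvyFree

variable {A B P Q : Type*}

/-- The perfect assignment `σ` of the goods `B` to the agents `A` is envy-free at the prices `x`
when no agent prefers another good to the assigned one; `u a b y` is the payoff of agent `a` from
buying good `b` at price `y`. -/
def EnvyFree [LE Q] (u : A → B → P → Q) (x : B → P) (σ : A ≃ B) : Prop :=
  ∀ a b, u a b (x b) ≤ u a (σ a) (x (σ a))

variable [LinearOrder P] [Preorder Q] {u : A → B → P → Q} {x y : B → P} {σ τ : A ≃ B}

theorem EnvyFree.lt_of_lt (hanti : ∀ a b, StrictAnti (u a b)) (hσ : EnvyFree u x σ)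
    (hτ : EnvyFree u y τ) {a : A} (ha : y (σ a) < x (σ a)) : y (τ a) < x (τ a) := by
  by_contra! hle
  exact lt_irrefl _ <| calc
    u a (σ a) (x (σ a)) < u a (σ a) (y (σ a)) := hanti _ _ ha
    _ ≤ u a (τ a) (y (τ a)) := hτ _ _
    _ ≤ u a (τ a) (x (τ a)) := (hanti _ _).antitone hle
    _ ≤ u a (σ a) (x (σ a)) := hσ _ _

theorem exists_equiv_piecewise [Finite B] {D : Set B} (h : ∀ a, σ a ∈ D → τ a ∈ D) :
    ∃ ρ : A ≃ B, ∀ a, (σ a ∈ D → ρ a = τ a) ∧ (σ a ∉ D → ρ a = σ a ∧ τ a ∉ D) := by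
  have hD : ∀ b ∈ D, σ.symm.trans τ b ∈ D := fun b hb => h _ (by simpa using hb)
  refine ⟨σ.trans (Equiv.Perm.ofSubtype (Equiv.Perm.subtypePermOfFintype _ hD)), fun a =>
    ⟨fun ha => ?_, fun ha => ⟨Equiv.Perm.ofSubtype_apply_of_not_mem _ ha, fun hτa => ha ?_⟩⟩⟩
  · rw [Equiv.trans_apply, Equiv.Perm.ofSubtype_apply_of_mem _ ha]
    simp
  · simpa using Equiv.Perm.perm_symm_on_of_perm_on_finite hD hτa

theorem EnvyFree.exists_inf [Finite B] (hanti : ∀ a b, StrictAnti (u a b))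
    (hσ : EnvyFree u x σ) (hτ : EnvyFree u y τ) : ∃ ρ : A ≃ B, EnvyFree u (x ⊓ y) ρ := by
  obtain ⟨ρ, hρ⟩ := exists_equiv_piecewise (D := {b | y b < x b})
    fun a => EnvyFree.lt_of_lt hanti hσ hτ (a := a)
  have payoff_ge : ∀ a, u a (σ a) (x (σ a)) ≤ u a (ρ a) ((x ⊓ y) (ρ a)) ∧
      u a (τ a) (y (τ a)) ≤ u a (ρ a) ((x ⊓ y) (ρ a)) := by
    intro a
    by_cases ha : y (σ a) < x (σ a)
    · have hτa : y (τ a) < x (τ a) := hσ.lt_of_lt hanti hτ ha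
      rw [(hρ a).1 ha, Pi.inf_apply, inf_eq_right.2 hτa.le]
      exact ⟨((hanti _ _).antitone ha.le).trans (hτ a (σ a)), le_rfl⟩
    · obtain ⟨hρa, hτa⟩ := (hρ a).2 ha
      rw [hρa, Pi.inf_apply, inf_eq_left.2 (not_lt.1 ha)]
      exact ⟨le_rfl, ((hanti _ _).antitone (not_lt.1 hτa)).trans (hσ a (τ a))⟩
  refine ⟨ρ, fun a b => ?_⟩
  rcases min_choice (x b) (y b) with hb | hb <;> rw [Pi.inf_apply, hb]
  · exact (hσ a b).trans (payoff_ge a).1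
  · exact (hτ a b).trans (payoff_ge a).2

end EnvyFree

section Auction

variable {A B : Type*} {u : A → B → ℝ → ℝ} {r x : B → ℝ} {ε : ℝ} {S : Set B} {σ : A ≃ B}

/-- A position of the ascending auction with step `ε` and reserve prices `r`: the goods in `S` are
vacant, and every other good is held by an agent who would not rather buy some good one step above
its current price. Agents assigned a vacant good by `σ` hold nothing; assigning them one keeps `σ`
a bijection. -/
structure IsAuctionState_s16 (u : A → B → ℝ → ℝ) (r : B → ℝ) (ε : ℝ) (S : Set B) (x : B → ℝ)
    (σ : A ≃ B) : Prop where
  reserve_le : r ≤ x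
  eq_reserve : ∀ b ∈ S, x b = r b
  no_envy : ∀ a, σ a ∉ S → ∀ b, u a b (x b + ε) ≤ u a (σ a) (x (σ a))

theorem IsAuctionState_s16.exists_bid [Finite B] (hanti : ∀ a b, Antitone (u a b)) (hε : 0 ≤ ε)
    (h : IsAuctionState_s16 u r ε S x σ) (hS : S.Nonempty) :
    ∃ b σ', IsAuctionState_s16 u r ε (S \ {b}) (Function.update x b (x b + ε)) σ' := by
  obtain ⟨v, hv⟩ := hS
  have : Nonempty B := ⟨v⟩
  obtain ⟨b, hb⟩ := Finite.exists_max fun b => u (σ.symm v) b (x b + ε)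
  have hxx' : x ≤ Function.update x b (x b + ε) :=
    le_update_self_iff.2 (le_add_of_nonneg_right hε)
  have offer_le : ∀ a b', u a b' (Function.update x b (x b + ε) b' + ε) ≤ u a b' (x b' + ε) :=
    fun a b' => hanti a b' (by gcongr; exact hxx' b')
  refine ⟨b, σ.trans (Equiv.swap v b), h.reserve_le.trans hxx', fun c hc => ?_,
    fun a ha b' => (offer_le a b').trans ?_⟩
  · rw [Function.update_of_ne hc.2, h.eq_reserve c hc.1]
  rcases eq_or_ne (σ a) v with hav | hav
  · obtain rfl : a = σ.symm v := σ.eq_symm_apply.2 hav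
    simpa using hb b'
  · have hab : σ a ≠ b := by
      intro hab
      refine ha ⟨by simpa [hab] using hv, ?_⟩
      simpa [hab] using (hab ▸ hav).symm
    rw [Equiv.trans_apply, Equiv.swap_apply_of_ne_of_ne hav hab] at ha ⊢
    rw [Function.update_of_ne hab]
    exact h.no_envy a (fun haS => ha ⟨haS, hab⟩) b'

theorem IsAuctionState_s16.exists_bound [Finite A] [Finite B] (hanti : ∀ a b, Antitone (u a b))
    (hlim : ∀ a b, Tendsto (u a b) atTop atBot) (r : B → ℝ) :
    ∃ Y, ∀ ε ≤ 1, ∀ S x σ, S.Nonempty → IsAuctionState_s16 u r ε S x σ → ∀ b, x b ≤ Y := by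
  have hY : ∀ᶠ Y in atTop, (∀ b, r b ≤ Y) ∧ ∀ a b v, u a b Y < u a v (r v + 1) := by
    simp only [eventually_and, eventually_all]
    exact ⟨fun b => eventually_ge_atTop _,
      fun a b v => (hlim a b).eventually (eventually_lt_atBot _)⟩
  obtain ⟨Y, hrY, hY⟩ := hY.exists
  refine ⟨Y, fun ε hε S x σ ⟨v, hv⟩ h b => ?_⟩
  by_cases hb : b ∈ S
  · exact (h.eq_reserve b hb).trans_le (hrY b)
  obtain ⟨a, rfl⟩ := σ.surjective b
  by_contra! hlt
  refine (hY a (σ a) v).not_ge ?_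
  calc u a v (r v + 1) ≤ u a v (x v + ε) := hanti a v (by rw [h.eq_reserve v hv]; gcongr)
    _ ≤ u a (σ a) (x (σ a)) := h.no_envy a hb v
    _ ≤ u a (σ a) Y := hanti _ _ hlt.le

theorem IsAuctionState_s16.exists_final [Finite B] (hanti : ∀ a b, Antitone (u a b)) (hε : 0 < ε)
    {Y : ℝ} (hY : ∀ S x σ, S.Nonempty → IsAuctionState_s16 u r ε S x σ → ∀ b, x b ≤ Y)
    (h : IsAuctionState_s16 u r ε S x σ) (hS : S.Nonempty) :
    ∃ b ∈ S, ∃ x' σ', IsAuctionState_s16 u r ε ∅ x' σ' ∧ x' b = r b + ε ∧ ∀ c, x' c ≤ Y + ε := by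
  cases nonempty_fintype B
  let totals : Set ℝ :=
    {s | ∃ T ⊆ S, T.Nonempty ∧ ∃ z ρ, IsAuctionState_s16 u r ε T z ρ ∧ ∑ c, z c = s}
  have hbdd : BddAbove totals := by
    refine ⟨∑ _ : B, Y, ?_⟩
    rintro _ ⟨T, -, hT, z, ρ, hz, rfl⟩
    exact Finset.sum_le_sum fun c _ => hY T z ρ hT hz c
  -- A bid raises the total price by `ε`, so one made within `ε` of the supremum is the last.
  obtain ⟨_, ⟨T, hTS, hT, z, ρ, hz, rfl⟩, hlt⟩ :=
    exists_lt_of_lt_csSup (s := totals) ⟨_, S, subset_rfl, hS, x, σ, h, rfl⟩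
      (sub_lt_self (sSup totals) hε)
  obtain ⟨b, ρ', hz'⟩ := hz.exists_bid hanti hε.le hT
  have hsum : ∑ c, Function.update z b (z b + ε) c = ∑ c, z c + ε := by
    rw [Finset.sum_update_of_mem (Finset.mem_univ b), Finset.sdiff_singleton_eq_erase,
      ← Finset.add_sum_erase _ z (Finset.mem_univ b)]
    ring
  have hempty : T \ {b} = ∅ := by
    by_contra! hne
    have := le_csSup hbdd ⟨_, sdiff_subset.trans hTS, hne, _, ρ', hz', rfl⟩
    linarith
  have hbT : b ∈ T := by
    obtain ⟨c, hc⟩ := hT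
    obtain rfl : c = b := sdiff_eq_empty.1 hempty hc
    exact hc
  refine ⟨b, hTS hbT, _, ρ', hempty ▸ hz', by simp [hz.eq_reserve b hbT], fun c => ?_⟩
  have hzY := hY T z ρ hT hz
  rcases eq_or_ne c b with rfl | hc
  · simpa using hzY c
  · simpa [hc] using (hzY c).trans (le_add_of_nonneg_right hε.le)

theorem isClosed_setOf_approx_envyFree [Finite A] [Finite B]
    (hcont : ∀ a b, Continuous (u a b)) (r : B → ℝ) (S : Set B) :
    IsClosed {z : ℝ × (B → ℝ) | ∃ σ : A ≃ B, ∃ b ∈ S, z.2 b = r b + z.1 ∧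
      ∀ a b, u a b (z.2 b + z.1) ≤ u a (σ a) (z.2 (σ a))} := by
  have : Finite (A ≃ B) := DFunLike.finite _
  simp only [ofPred_exists, ofPred_and, ofPred_forall]
  refine isClosed_iUnion_of_finite fun σ => isClosed_iUnion_of_finite fun b =>
    isClosed_const.inter <| .inter (isClosed_eq (by fun_prop) (by fun_prop)) <|
      isClosed_iInter fun a => isClosed_iInter fun b => isClosed_le ?_ ?_ <;> fun_prop

theorem exists_envyFree_eq_reserve [Finite A] [Finite B] (hcont : ∀ a b, Continuous (u a b))
    (hanti : ∀ a b, Antitone (u a b)) (hlim : ∀ a b, Tendsto (u a b) atTop atBot)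
    (hS : S.Nonempty) (hσ : ∀ a, σ a ∉ S → ∀ b, u a b (r b) ≤ u a (σ a) (r (σ a))) :
    ∃ x τ, EnvyFree u x τ ∧ r ≤ x ∧ ∃ b ∈ S, x b = r b := by
  obtain ⟨Y, hY⟩ := IsAuctionState_s16.exists_bound hanti hlim r
  let Z : Set (ℝ × (B → ℝ)) := Icc (0, r) (1, fun _ => Y + 1) ∩ {z | ∃ τ : A ≃ B, ∃ b ∈ S,
    z.2 b = r b + z.1 ∧ ∀ a b, u a b (z.2 b + z.1) ≤ u a (τ a) (z.2 (τ a))}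
  have hZ : IsClosed (Prod.fst '' Z) :=
    ((isCompact_Icc.inter_right (isClosed_setOf_approx_envyFree hcont r S)).image
      continuous_fst).isClosed
  have hpos : Ioc 0 1 ⊆ Prod.fst '' Z := by
    intro ε ⟨hε, hε1⟩
    have start : IsAuctionState_s16 u r ε S r σ := ⟨le_rfl, fun _ _ => rfl, fun a ha b =>
      (hanti a b (le_add_of_nonneg_right hε.le)).trans (hσ a ha b)⟩
    obtain ⟨b, hb, x, τ, hx, hxb, hxY⟩ := start.exists_final hanti hε (hY ε hε1) hS
    exact ⟨(ε, x), ⟨⟨⟨hε.le, hx.reserve_le⟩, hε1, fun c => (hxY c).trans (add_le_add_right hε1 Y)⟩,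
      τ, b, hb, hxb, fun a => hx.no_envy a (notMem_empty _)⟩, rfl⟩
  have h0 : (0 : ℝ) ∈ closure (Ioc 0 1) := by simp [closure_Ioc]
  obtain ⟨⟨_, x⟩, ⟨⟨⟨-, hrx⟩, -⟩, τ, b, hb, hxb, hτ⟩, rfl⟩ := closure_minimal hpos hZ h0
  exact ⟨x, τ, by simpa [EnvyFree] using hτ, hrx, b, hb, by simpa using hxb⟩

theorem EnvyFree.exists_between [Finite B] (hcont : ∀ a b, Continuous (u a b))
    (hanti : ∀ a b, StrictAnti (u a b)) (hlim : ∀ a b, Tendsto (u a b) atTop atBot)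
    {p p' q : B → ℝ} {σ τ : A ≃ B} (hσ : EnvyFree u p σ) (hτ : EnvyFree u p' τ)
    (hlt : ∃ b, p b < p' b) (hpq : p ≤ q) (hqp' : q ≤ p') :
    ∃ y ρ, EnvyFree u y ρ ∧ q ≤ y ∧ y ≤ p' ∧ ∃ b, p b < p' b ∧ y b = q b := by
  have : Finite A := .of_equiv B σ.symm
  have hstart : ∀ a, σ a ∉ {b | p b < p' b} → ∀ b, u a b (q b) ≤ u a (σ a) (q (σ a)) := by
    intro a ha b
    calc u a b (q b) ≤ u a b (p b) := (hanti _ _).antitone (hpq b)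
      _ ≤ u a (σ a) (p (σ a)) := hσ a b
      _ = u a (σ a) (q (σ a)) := by rw [(hpq _).antisymm ((hqp' _).trans (not_lt.1 ha))]
  obtain ⟨x, υ, hx, hqx, b, hb, hxb⟩ :=
    exists_envyFree_eq_reserve hcont (fun a b => (hanti a b).antitone) hlim hlt hstart
  obtain ⟨ρ, hρ⟩ := hx.exists_inf hanti hτ
  exact ⟨x ⊓ p', ρ, hρ, le_inf hqx hqp', inf_le_right, b, hb,
    by rw [Pi.inf_apply, hxb, inf_eq_left.2 (hqp' b)]⟩

end Auction

section Equilibrium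

theorem exists_equiv_extending_inl {α β γ : Type*} [Finite γ] (e : α ⊕ β ≃ γ) {f : α → γ}
    (hf : Function.Injective f) : ∃ g : α ⊕ β ≃ γ, ∀ a, g (.inl a) = f a := by
  cases nonempty_fintype γ
  have := Fintype.ofEquiv γ e.symm
  obtain ⟨g, hg⟩ := MapsTo.exists_equiv_extend_of_card_eq (t := Finset.univ)
    (s := range Sum.inl) (f := Sum.elim f (e ∘ .inr)) (Fintype.card_congr e)
    (fun _ _ => Finset.mem_coe.2 (Finset.mem_univ _)) (by
      rintro _ ⟨a, rfl⟩ _ ⟨a', rfl⟩ h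
      exact congrArg _ (hf h))
  exact ⟨g.trans (Equiv.subtypeUnivEquiv Finset.mem_univ), fun a => hg _ (mem_range_self a)⟩

theorem injOn_of_segment_le {J : Type*} {p p' : J → ℝ} {f : ℝ → J → ℝ} {s : Set ℝ}
    (hle : ∀ t ∈ s, ∀ j, (1 - t) * p j + t * p' j ≤ f t j)
    (heq : ∀ t ∈ s, ∃ j, p j < p' j ∧ f t j = (1 - t) * p j + t * p' j) : InjOn f s := by
  have le_of_eq : ∀ a ∈ s, ∀ b ∈ s, f a = f b → b ≤ a := by
    intro a ha b hb hab
    obtain ⟨j, hj, hfj⟩ := heq a ha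
    have hbj := hle b hb j
    rw [← hab, hfj] at hbj
    nlinarith
  exact fun a ha b hb hab => (le_of_eq b hb a ha hab.symm).antisymm (le_of_eq a ha b hb hab)

variable {I J : Type} [Fintype I] [Fintype J] {M : Market I J} {p p' : J → ℝ} {w w' : I → ℝ}
  {μ μ' : I → Option J}

/-- Utilities of the market enlarged by dummy buyers `J` and worthless goods `I`. A buyer stays
unmatched by taking a worthless good at price `0`; a dummy buyer takes a real good only when it is
free. -/
def Market.extendedUtility (M : Market I J) : I ⊕ J → J ⊕ I → ℝ → ℝ
  | .inl i, .inl j => M.u i j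
  | _, _ => Neg.neg

@[simp]
theorem Market.extendedUtility_inl_inl (M : Market I J) (i : I) (j : J) :
    M.extendedUtility (.inl i) (.inl j) = M.u i j :=
  rfl

@[simp]
theorem Market.extendedUtility_inr_left (M : Market I J) (j : J) (b : J ⊕ I) :
    M.extendedUtility (.inr j) b = Neg.neg :=
  rfl

@[simp]
theorem Market.extendedUtility_inr_right (M : Market I J) (a : I ⊕ J) (i : I) :
    M.extendedUtility a (.inr i) = Neg.neg := by
  cases a <;> rfl

theorem Market.continuous_extendedUtility (M : Market I J) :
    ∀ a b, Continuous (M.extendedUtility a b)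
  | .inl i, .inl j => M.cont i j
  | .inl _, .inr _ | .inr _, _ => continuous_neg

theorem Market.strictAnti_extendedUtility (M : Market I J) :
    ∀ a b, StrictAnti (M.extendedUtility a b)
  | .inl i, .inl j => M.anti i j
  | .inl _, .inr _ | .inr _, _ => fun _ _ => neg_lt_neg

theorem Market.tendsto_extendedUtility (M : Market I J) :
    ∀ a b, Tendsto (M.extendedUtility a b) atTop atBot
  | .inl i, .inl j => tendsto_atTop_atBot_of_antitone (M.anti i j).antitone fun c =>
      (M.surj i j c).imp fun _ h => h.le
  | .inl _, .inr _ | .inr _, _ => tendsto_neg_atTop_atBot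

theorem IsEquilib.exists_envyFree (h : IsEquilib M p w μ) :
    ∃ σ, EnvyFree M.extendedUtility (Sum.elim p 0) σ := by
  obtain ⟨hinj, hp, hw, hmatched, hopt, hunmatched, hunsold⟩ := h
  have hf : Function.Injective fun i => (μ i).elim (Sum.inr i : J ⊕ I) .inl := by
    intro i i' hii'
    rcases hi : μ i with _ | j <;> rcases hi' : μ i' with _ | j' <;>
      simp only [hi, hi', Option.elim_none, Option.elim_some, reduceCtorEq, Sum.inl.injEq,
        Sum.inr.injEq] at hii'
    · exact hii'
    · exact hinj i i' j hi (hii' ▸ hi')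
  obtain ⟨σ, hσ⟩ := exists_equiv_extending_inl (Equiv.sumComm I J) hf
  have buyer_payoff : ∀ i,
      M.extendedUtility (.inl i) (σ (.inl i)) (Sum.elim p 0 (σ (.inl i))) = w i := by
    intro i
    rw [hσ i]
    rcases hi : μ i with _ | j
    · simp [hunmatched i hi]
    · simp [hmatched i j hi]
  have dummy_price : ∀ j, Sum.elim p 0 (σ (.inr j)) = 0 := by
    intro j
    rcases hj : σ (.inr j) with j' | i
    · refine hunsold j' fun i hi => ?_
      have hij : σ (.inl i) = σ (.inr j) := by rw [hσ i, hi, hj]; rfl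
      exact Sum.inl_ne_inr (σ.injective hij)
    · rfl
  refine ⟨σ, ?_⟩
  rintro (i | j) b
  · rw [buyer_payoff]
    rcases b with j | i'
    · exact hopt i j
    · simpa using hw i
  · rw [dummy_price]
    rcases b with j' | i
    · simpa using hp j'
    · simp

theorem EnvyFree.exists_isEquilib [Nonempty I] {σ : I ⊕ J ≃ J ⊕ I} (hp : 0 ≤ p)
    (h : EnvyFree M.extendedUtility (Sum.elim p 0) σ) : ∃ w μ, IsEquilib M p w μ := by
  obtain ⟨i₀⟩ := ‹Nonempty I›
  let w (i : I) := M.extendedUtility (.inl i) (σ (.inl i)) (Sum.elim p 0 (σ (.inl i)))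
  let μ (i : I) := (σ (.inl i)).getLeft?
  have hμ : ∀ {i j}, μ i = some j ↔ σ (.inl i) = .inl j := Sum.getLeft?_eq_some_iff
  refine ⟨w, μ, fun i i' j hi hi' => ?_, hp, fun i => ?_, fun i j hi => ?_,
    fun i j => h (.inl i) (.inl j), fun i hi => ?_, fun j hj => le_antisymm ?_ (hp j)⟩
  · exact Sum.inl_injective (σ.injective ((hμ.1 hi).trans (hμ.1 hi').symm))
  · simpa [w] using h (.inl i) (.inr i₀)
  · simp [w, hμ.1 hi]
  · obtain ⟨i', hi'⟩ : ∃ i', σ (.inl i) = .inr i' := Sum.isRight_iff.1 (by simpa [μ] using hi)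
    simp [w, hi']
  · obtain ⟨i | j', hb⟩ := σ.surjective (.inl j)
    · exact absurd (hμ.2 hb) (hj i)
    · simpa [hb] using h (.inr j') (.inr i₀)

theorem IsEquilib.exists_between (h : IsEquilib M p w μ) (h' : IsEquilib M p' w' μ')
    (hlt : ∃ j, p j < p' j) {q : J → ℝ} (hpq : p ≤ q) (hqp' : q ≤ p') :
    ∃ r v ν, IsEquilib M r v ν ∧ q ≤ r ∧ ∃ j, p j < p' j ∧ r j = q j := by
  have hp : 0 ≤ p := h.2.1
  have : Nonempty I := by
    by_contra hI
    rw [not_nonempty_iff] at hI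
    obtain ⟨j, hj⟩ := hlt
    exact hj.not_ge ((h'.2.2.2.2.2.2 j hI.elim).trans_le (hp j))
  obtain ⟨σ, hσ⟩ := h.exists_envyFree
  obtain ⟨τ, hτ⟩ := h'.exists_envyFree
  obtain ⟨y, ρ, hρ, hqy, hyp', b, hb, hyb⟩ := hσ.exists_between M.continuous_extendedUtility
    M.strictAnti_extendedUtility M.tendsto_extendedUtility hτ (q := Sum.elim q 0)
    (by simpa using hlt) (by simpa [Sum.elim_le_elim_iff] using hpq)
    (by simpa [Sum.elim_le_elim_iff] using hqp')
  obtain ⟨r, rfl⟩ : ∃ r : J → ℝ, y = Sum.elim r 0 := by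
    refine ⟨y ∘ .inl, funext ?_⟩
    rintro (j | i)
    · rfl
    · exact (hyp' (.inr i)).antisymm (hqy (.inr i))
  have hqr : q ≤ r := (Sum.elim_le_elim_iff.1 hqy).1
  obtain ⟨v, ν, hr⟩ := hρ.exists_isEquilib (hp.trans (hpq.trans hqr))
  rcases b with j | i
  · exact ⟨r, v, ν, hr, hqr, j, hb, hyb⟩
  · exact absurd hb (lt_irrefl _)

theorem IsEquilib.exists_on_segment (h : IsEquilib M p w μ) (h' : IsEquilib M p' w' μ')
    (hlt : p < p') {t : ℝ} (ht : t ∈ Icc (0 : ℝ) 1) :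
    ∃ W : (J → ℝ) × (I → ℝ) × (I → Option J), IsEquilib M W.1 W.2.1 W.2.2 ∧
      (t = 0 → W = (p, w, μ)) ∧ (t = 1 → W = (p', w', μ')) ∧
      (∀ j, (1 - t) * p j + t * p' j ≤ W.1 j) ∧
      ∃ j, p j < p' j ∧ W.1 j = (1 - t) * p j + t * p' j := by
  obtain ⟨hle, j, hj⟩ := Pi.lt_def.1 hlt
  rcases eq_or_ne t 0 with rfl | h0
  · exact ⟨(p, w, μ), h, by simp, by simp, by simp, j, hj, by simp⟩
  rcases eq_or_ne t 1 with rfl | h1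
  · exact ⟨(p', w', μ'), h', by simp, by simp, by simp, j, hj, by simp⟩
  obtain ⟨r, v, ν, hr, hqr, hrq⟩ := h.exists_between h' ⟨j, hj⟩
    (q := fun j => (1 - t) * p j + t * p' j) (fun j => by nlinarith [hle j, ht.1])
    (fun j => by nlinarith [hle j, ht.2])
  exact ⟨(r, v, ν), hr, (absurd · h0), (absurd · h1), hqr, hrq⟩

theorem continuum_of_equilibria_general (h : IsEquilib M p w μ) (h' : IsEquilib M p' w' μ')
    (hle : p ≤ p') (hne : p ≠ p') :
    ∃ W : ℝ → (J → ℝ) × (I → ℝ) × (I → Option J),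
      (∀ t ∈ Icc (0 : ℝ) 1, IsEquilib M (W t).1 (W t).2.1 (W t).2.2) ∧
      W 0 = (p, w, μ) ∧ W 1 = (p', w', μ') ∧
      (∀ t ∈ Icc (0 : ℝ) 1, ∀ j, (1 - t) * p j + t * p' j ≤ (W t).1 j) ∧
      InjOn (fun t => (W t).1) (Icc 0 1) := by
  choose! W hequilib h0 h1 hsegment htight using
    fun (t : ℝ) (ht : t ∈ Icc 0 1) => h.exists_on_segment h' (hle.lt_of_ne hne) ht
  exact ⟨W, hequilib, h0 0 (by simp) rfl, h1 1 (by simp) rfl, hsegment,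
    injOn_of_segment_le hsegment htight⟩

end Equilibrium

/-- Continuum of equilibria: if `|I| = |J|` and the lowest and highest
equilibria are distinct, there is an injective map `t ↦ W(t)` on `[0,1]` of
competitive equilibria interpolating between them, with `W(t)`'s prices
dominating the convex combination `(1-t)·p_low + t·p_high`. -/
theorem continuum_of_equilibria {I J : Type} [Fintype I] [Fintype J]
    (M : Market I J) (hcard : Fintype.card I = Fintype.card J)
    (pl : J → ℝ) (wl : I → ℝ) (μl : I → Option J) (hlow : IsLowest M pl wl μl)
    (ph : J → ℝ) (wh : I → ℝ) (μh : I → Option J) (hhigh : IsHighest M ph wh μh)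
    (hne : pl ≠ ph) :
    ∃ P : ℝ → (J → ℝ) × (I → ℝ) × (I → Option J),
      (∀ t ∈ Set.Icc (0:ℝ) 1, IsEquilib M (P t).1 (P t).2.1 (P t).2.2) ∧
      (P 0).1 = pl ∧ (P 1).1 = ph ∧
      (∀ t ∈ Set.Icc (0:ℝ) 1, ∀ j, (1 - t) * pl j + t * ph j ≤ (P t).1 j) ∧
      Set.InjOn P (Set.Icc (0:ℝ) 1) := by
  obtain ⟨P, hP, h0, h1, hseg, hinj⟩ :=
    continuum_of_equilibria_general hlow.1 hhigh.1 (hlow.2 ph wh μh hhigh.1) hne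
  exact ⟨P, hP, by rw [h0], by rw [h1], hseg, fun s hs t ht h => hinj hs ht (congrArg Prod.fst h)⟩
end
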